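/- arXiv:1603.06444 — 2 statements merged into one kernel-verified Lean document; each statement's English description precedes it below -/
import Mathlib

section
/- Let f(x) ∈ ℚ[x] be a polynomial of degree d with f(ℤ) ⊆ ℤ, and let m_0, …, m_d be its Macaulay parameters, i.e., the unique integers with f(x) = Σ_{i=0}^{d} ( binom(x+i, i+1) − binom(x+i−m_i, i+1) ). Then f(x) is a Hilbert polynomial if and only if m_0 ≥ m_1 ≥ ⋯ ≥ m_d ≥ 0. -/
open Polynomial

/-- A polynomial `f ∈ ℚ[x]` is a *Hilbert polynomial* if there exist a field `k`,
a standard graded `k`-algebra `R` (a commutative `ℕ`-graded `k`-algebra with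
finite-dimensional graded pieces, generated as a `k`-algebra by its degree-one part)
and an `N₀` such that `dim_k R_i = f(i)` for all `i ≥ N₀`. -/
def IsHilbertPolynomial (f : Polynomial ℚ) : Prop :=
  ∃ (k : Type) (R : Type) (_ : Field k) (_ : CommRing R) (_ : Algebra k R)
    (𝒜 : ℕ → Submodule k R) (_ : GradedAlgebra 𝒜),
    (∀ i : ℕ, FiniteDimensional k (𝒜 i)) ∧
    Algebra.adjoin k ((𝒜 1 : Submodule k R) : Set R) = ⊤ ∧
    ∃ N₀ : ℕ, ∀ i : ℕ, N₀ ≤ i → (Module.finrank k (𝒜 i) : ℚ) = f.eval (i : ℚ)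

/-- The binomial coefficient polynomial `binom(y, j) = y(y-1)⋯(y-j+1)/j!` in `ℚ[x]`. -/
noncomputable def binomPoly (j : ℕ) : Polynomial ℚ :=
  Polynomial.C ((j.factorial : ℚ)⁻¹) * descPochhammer ℚ j


section CoreAlgebra

theorem finrank_map_add_inf_ker {K M N : Type*} [Field K] [AddCommGroup M] [Module K M]
    [AddCommGroup N] [Module K N] (g : M →ₗ[K] N) (p : Submodule K M) [FiniteDimensional K p] :
    Module.finrank K (p.map g) + Module.finrank K (p ⊓ LinearMap.ker g : Submodule K M)
      = Module.finrank K p := by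
  have h := LinearMap.finrank_range_add_finrank_ker (g.domRestrict p)
  rw [LinearMap.range_domRestrict] at h
  rw [← h]
  congr 1
  have e : LinearMap.ker (g.domRestrict p) = (LinearMap.ker g).comap p.subtype := by
    ext x; simp
  rw [e, ← Submodule.map_comap_subtype]
  exact LinearEquiv.finrank_eq
    (Submodule.equivMapOfInjective p.subtype p.injective_subtype _).symm

variable {K R : Type*} [Field K] [CommRing R] [Algebra K R] (A : ℕ → Submodule K R)
  [GradedAlgebra A]

theorem std_mul (hgen : Algebra.adjoin K ((A 1 : Submodule K R) : Set R) = ⊤) (i : ℕ) :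
    A (i + 1) ≤ A 1 * A i := by
  classical
  have key : ∀ x : R, ∀ i, (DirectSum.decompose A x (i+1) : R) ∈ A 1 * A i := by
    intro x
    have hx : x ∈ Algebra.adjoin K ((A 1 : Submodule K R) : Set R) := by rw [hgen]; trivial
    induction hx using Algebra.adjoin_induction with
    | mem x hx =>
      intro i
      rcases Nat.eq_zero_or_pos i with rfl | hi
      · rw [DirectSum.decompose_of_mem_same A hx]
        rw [← mul_one x]
        exact Submodule.mul_mem_mul hx (SetLike.GradedOne.one_mem)
      · rw [DirectSum.decompose_of_mem_ne A hx (by omega)]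
        exact zero_mem _
    | algebraMap r =>
      intro i
      have : algebraMap K R r ∈ A 0 := SetLike.algebraMap_mem_graded A r
      rw [DirectSum.decompose_of_mem_ne A this (by omega)]
      exact zero_mem _
    | add x y _ _ hx hy =>
      intro i
      rw [DirectSum.decompose_add]
      exact add_mem (hx i) (hy i)
    | mul x y _ _ hx hy =>
      intro i
      rw [DirectSum.decompose_mul, DirectSum.coe_mul_apply]
      refine Submodule.sum_mem _ ?_
      rintro ⟨a, b⟩ hab
      have hab' : a + b = i + 1 := by simpa using (Finset.mem_filter.mp hab).2
      simp only
      have hle : ∀ a b, A a * A b ≤ A (a + b) := fun a b =>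
        Submodule.mul_le.mpr fun u hu v hv => SetLike.mul_mem_graded hu hv
      rcases a with _ | a
      · have hb : b = i + 1 := by omega
        subst hb
        have h1 := Submodule.mul_mem_mul (DirectSum.decompose A x 0).2 (hy i)
        rw [mul_left_comm] at h1
        refine (mul_le_mul' le_rfl ?_ : _ ≤ A 1 * A i) h1
        simpa using hle 0 i
      · have h1 := Submodule.mul_mem_mul (hx a) (DirectSum.decompose A y b).2
        rw [mul_assoc] at h1
        refine (mul_le_mul' le_rfl ?_ : _ ≤ A 1 * A i) h1
        have : a + b = i := by omega
        exact this ▸ hle a b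
  intro x hx
  have := key x i
  rwa [DirectSum.decompose_of_mem_same A hx] at this

/-- The degree `j` part of an ideal. -/
def gpart (I : Ideal R) (j : ℕ) : Submodule K R := A j ⊓ I.restrictScalars K

theorem mem_gpart {I : Ideal R} {j : ℕ} {x : R} : x ∈ gpart A I j ↔ x ∈ A j ∧ x ∈ I := Iff.rfl

theorem sat_exists [IsNoetherianRing R] (hstd : ∀ i, A (i + 1) ≤ A 1 * A i) (I : Ideal R)
    (hI : I.IsHomogeneous A) :
    ∃ I' : Ideal R, I'.IsHomogeneous A ∧ I ≤ I' ∧ (∃ N, ∀ j, N ≤ j → gpart A I' j ≤ gpart A I j) ∧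
      ∀ x, (∀ v ∈ A 1, v * x ∈ I') → x ∈ I' := by
  let S : Set (Ideal R) := {I' | I'.IsHomogeneous A ∧ I ≤ I' ∧
    (∃ N, ∀ j, N ≤ j → gpart A I' j ≤ gpart A I j)}
  have hS : S.Nonempty := ⟨I, hI, le_rfl, 0, fun _ _ => le_rfl⟩
  obtain ⟨I', ⟨h1, h2, N, hN⟩, hmax⟩ := set_has_maximal_iff_noetherian.mpr
    (inferInstance : IsNoetherian R R) S hS
  refine ⟨I', h1, h2, ⟨N, hN⟩, ?_⟩
  have hom : ∀ j, ∀ x ∈ A j, (∀ v ∈ A 1, v * x ∈ I') → x ∈ I' := by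
    intro j x hx hv
    by_contra hxI
    have hpow : ∀ i, ∀ s ∈ A (i + 1), s * x ∈ I' := by
      intro i s hs
      have := hstd i hs
      refine Submodule.mul_induction_on this ?_ ?_
      · intro a ha b hb
        rw [mul_comm a b, mul_assoc]
        exact Ideal.mul_mem_left _ _ (hv a ha)
      · intro a b ha hb
        rw [add_mul]
        exact add_mem ha hb
    have hlt : I' < I' ⊔ Ideal.span {x} := by
      refine lt_of_le_of_ne le_sup_left ?_
      intro h
      apply hxI
      rw [h]
      exact Ideal.mem_sup_right (Ideal.mem_span_singleton_self x)
    refine hmax (I' ⊔ Ideal.span {x}) ⟨?_, h2.trans le_sup_left, max N (j + 1), ?_⟩ hlt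
    · refine h1.sup (Ideal.homogeneous_span A _ ?_)
      rintro y rfl
      exact ⟨j, hx⟩
    · intro i hi y hy
      apply hN i (by omega)
      refine ⟨hy.1, ?_⟩
      obtain ⟨a, ha, b, hb, hab⟩ := Submodule.mem_sup.mp hy.2
      obtain ⟨s, rfl⟩ := Ideal.mem_span_singleton'.mp hb
      have e : y = DirectSum.decompose A a i + DirectSum.decompose A s (i - j) * x := by
        rw [← DirectSum.decompose_of_mem_same A hy.1, ← hab, DirectSum.decompose_add,
          ← DirectSum.coe_decompose_mul_of_right_mem_of_le A hx (by omega)]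
        rfl
      rw [e]
      refine I'.add_mem (h1 i ha) ?_
      obtain ⟨t, ht⟩ : ∃ t, i - j = t + 1 := ⟨i - j - 1, by omega⟩
      rw [ht]
      exact hpow t _ (Subtype.mem _)
  intro x hx
  rw [h1.mem_iff]
  intro i
  refine hom i _ (Subtype.mem _) ?_
  intro v hv
  have := h1 (1 + i) (hx v hv)
  rwa [DirectSum.coe_decompose_mul_add_of_left_mem A hv] at this

theorem exists_regular [IsNoetherianRing R] [Infinite K] (I : Ideal R)
    (hsat : ∀ x, (∀ v ∈ A 1, v * x ∈ I) → x ∈ I) :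
    ∃ l ∈ A 1, ∀ x, l * x ∈ I → x ∈ I := by
  classical
  by_contra hcon
  push Not at hcon
  have hfin := associatedPrimes.finite R (R ⧸ I)
  let g : Ideal R → Submodule K (A 1) := fun p => (p.restrictScalars K).comap (A 1).subtype
  have htop := Subspace.top_mem_of_biUnion_eq_univ (k := K) (E := A 1)
    (s := hfin.toFinset.image g) (by
      rw [Set.eq_univ_iff_forall]
      intro l
      obtain ⟨x, hx1, hx2⟩ := hcon l l.2
      have : (l : R) ∈ ⋃ p ∈ associatedPrimes R (R ⧸ I), (p : Set R) := by
        rw [biUnion_associatedPrimes_eq_zero_divisors]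
        refine ⟨Ideal.Quotient.mk I x, ?_, ?_⟩
        · rwa [Ne, Ideal.Quotient.eq_zero_iff_mem]
        · rw [← Ideal.Quotient.mk_eq_mk, ← Submodule.Quotient.mk_smul, Ideal.Quotient.mk_eq_mk]
          rwa [Ideal.Quotient.eq_zero_iff_mem]
      simp only [Set.mem_iUnion] at this ⊢
      obtain ⟨p, hp, hlp⟩ := this
      exact ⟨g p, Finset.mem_image_of_mem _ (by simpa using hp), hlp⟩)
  obtain ⟨p, hp, hpt⟩ := Finset.mem_image.mp htop
  have hp' : IsAssociatedPrime p (R ⧸ I) := AssociatedPrimes.mem_iff.mp (by simpa using hp)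
  rw [isAssociatedPrime_iff] at hp'
  obtain ⟨hprime, x, hx⟩ := hp'
  obtain ⟨x, rfl⟩ := Ideal.Quotient.mk_surjective x
  have hmem : ∀ r, r ∈ p ↔ r * x ∈ I := by
    intro r
    rw [hx, Submodule.mem_colon_singleton]
    rw [← Ideal.Quotient.mk_eq_mk, ← Submodule.Quotient.mk_smul, Ideal.Quotient.mk_eq_mk]
    rw [Submodule.mem_bot, Ideal.Quotient.eq_zero_iff_mem, smul_eq_mul]
  have hxI : x ∈ I := by
    apply hsat
    intro v hv
    rw [← hmem]
    have : (⟨v, hv⟩ : A 1) ∈ g p := by rw [hpt]; trivial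
    exact this
  apply hprime.ne_top
  rw [Ideal.eq_top_iff_one, hmem]
  simpa using hxI
end CoreAlgebra
section Numerics

/-- Value of the binomial polynomial at a rational number. -/
noncomputable def bq (k : ℕ) (y : ℚ) : ℚ := (binomPoly k).eval y

theorem bq_zero (y : ℚ) : bq 0 y = 1 := by simp [bq, binomPoly]

theorem bq_one (y : ℚ) : bq 1 y = y := by simp [bq, binomPoly]

theorem bq_pascal (k : ℕ) (y : ℚ) : bq (k + 1) (y + 1) = bq (k + 1) y + bq k y := by
  unfold bq binomPoly
  simp only [eval_mul, eval_C]
  have h1 : (descPochhammer ℚ (k + 1)).eval (y + 1) = (y + 1) * (descPochhammer ℚ k).eval y := by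
    rw [descPochhammer_succ_left]
    simp [eval_comp]
  have h2 : (descPochhammer ℚ (k + 1)).eval y = (descPochhammer ℚ k).eval y * (y - k) := by
    rw [descPochhammer_succ_right]
    simp
  rw [h1, h2, Nat.factorial_succ]
  have : (k.factorial : ℚ) ≠ 0 := by exact_mod_cast k.factorial_ne_zero
  have h3 : ((k : ℚ) + 1) ≠ 0 := by positivity
  push_cast
  field_simp
  ring

theorem bq_nat (k n : ℕ) : bq k (n : ℚ) = (n.choose k : ℚ) := by
  induction n generalizing k with
  | zero =>
    rcases k with _ | k
    · simp [bq_zero]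
    · simp [bq, binomPoly, descPochhammer_succ_left]
  | succ n ih =>
    rcases k with _ | k
    · simp [bq_zero]
    · push_cast
      rw [bq_pascal, ih, ih, Nat.choose_succ_succ]
      push_cast
      ring

/-- The polynomial with Macaulay parameters `m 0, …, m (n-1)`. -/
noncomputable def Pq (n : ℕ) (m : ℕ → ℤ) (x : ℚ) : ℚ :=
  ∑ i ∈ Finset.range n, (bq (i + 1) (x + i) - bq (i + 1) (x + i - m i))

theorem Pq_diff (n : ℕ) (m : ℕ → ℤ) (x : ℚ) :
    Pq (n + 1) m (x + 1) - Pq (n + 1) m x = Pq n (fun i => m (i + 1)) (x + 1) := by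
  unfold Pq
  rw [← Finset.sum_sub_distrib, Finset.sum_range_succ']
  have h : ∀ i : ℕ, bq (i + 1) (x + 1 + i) - bq (i + 1) (x + 1 + i - m i)
      - (bq (i + 1) (x + i) - bq (i + 1) (x + i - m i)) = bq i (x + i) - bq i (x + i - m i) := by
    intro i
    rw [show x + 1 + i = (x + i) + 1 by ring, show x + i + 1 - m i = (x + i - m i) + 1 by ring,
      bq_pascal, bq_pascal]
    ring
  rw [h 0, bq_zero, bq_zero]
  simp only [h]
  rw [sub_self, add_zero]
  refine Finset.sum_congr rfl fun i _ => ?_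
  push_cast
  rw [show x + (i + 1) = x + 1 + i by ring]

theorem Pq_alt (n : ℕ) (m : ℕ → ℤ) (x : ℚ) :
    ∑ i ∈ Finset.range n, (bq (i + 1) (x + i + 1 - m (i + 1)) - bq (i + 1) (x + i + 1 - m i))
      = Pq n m x + (bq n (x + n - m n) - bq n (x + n)) := by
  induction n with
  | zero => simp [Pq, bq_zero]
  | succ n ih =>
    have hP : Pq (n + 1) m x = Pq n m x + (bq (n + 1) (x + n) - bq (n + 1) (x + n - m n)) := by
      unfold Pq
      rw [Finset.sum_range_succ]
    rw [Finset.sum_range_succ, ih, hP]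
    push_cast
    rw [show x + n + 1 - m n = (x + n - m n) + 1 by ring, bq_pascal,
      show x + ((n : ℚ) + 1) = (x + n) + 1 by ring, bq_pascal n (x + n)]
    ring

/-- The Hilbert function of the lexicographic ideal with Macaulay parameters `m`. -/
def Lz (n : ℕ) (m : ℕ → ℤ) (j : ℕ) : ℤ :=
  ∑ i ∈ Finset.range n, (((((j : ℤ) + i + 1 - m (i + 1)).toNat.choose (i + 1) : ℕ) : ℤ)
    - ((((j : ℤ) + i + 1 - m i).toNat.choose (i + 1) : ℕ) : ℤ))

theorem Lz_eq_Pq (n : ℕ) (m : ℕ → ℤ) (hn : m n = 0) (j : ℕ) (hm : ∀ i, m i ≤ j + 1) :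
    (Lz n m j : ℚ) = Pq n m j := by
  have h := Pq_alt n m j
  rw [hn] at h
  simp only [Int.cast_zero, sub_zero, sub_self, add_zero] at h
  rw [← h]
  unfold Lz
  push_cast
  have key : ∀ (i : ℕ) (c : ℤ), c ≤ j + 1 →
      (((j : ℤ) + i + 1 - c).toNat.choose (i + 1) : ℚ) = bq (i + 1) ((j : ℚ) + i + 1 - c) := by
    intro i c hc
    rw [← bq_nat]
    congr 1
    have : (((j : ℤ) + i + 1 - c).toNat : ℤ) = (j : ℤ) + i + 1 - c := Int.toNat_of_nonneg (by omega)
    have h2 : ((((j : ℤ) + i + 1 - c).toNat : ℤ) : ℚ) = (((j : ℤ) + i + 1 - c : ℤ) : ℚ) := by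
      rw [this]
    push_cast at h2
    exact h2
  refine Finset.sum_congr rfl fun i _ => ?_
  rw [key i _ (hm _), key i _ (hm _)]

theorem hockey (i : ℕ) (c : ℤ) (hc : 0 ≤ c) (j : ℕ) :
    ∑ t ∈ Finset.range (j + 1), ((t : ℤ) + i + 1 - c).toNat.choose (i + 1)
      = ((j : ℤ) + i + 2 - c).toNat.choose (i + 2) := by
  have step : ∀ z : ℤ, (z + i + 2 - c).toNat.choose (i + 2) =
      (z + i + 1 - c).toNat.choose (i + 1) + (z + i + 1 - c).toNat.choose (i + 2) := by
    intro z
    rcases le_or_gt 0 (z + i + 1 - c) with h | h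
    · obtain ⟨w, hw⟩ := Int.eq_ofNat_of_zero_le h
      rw [show z + i + 2 - c = (w : ℤ) + 1 by omega, hw]
      have : ((w : ℤ) + 1).toNat = w + 1 := by omega
      rw [this, Int.toNat_natCast, Nat.choose_succ_succ]
    · have h1 : (z + i + 1 - c).toNat = 0 := by omega
      have h2 : (z + i + 2 - c).toNat = 0 := by omega
      simp [h1, h2]
  induction j with
  | zero =>
    rw [step]
    have : (((0 : ℕ) : ℤ) + i + 1 - c).toNat.choose (i + 2) = 0 :=
      Nat.choose_eq_zero_of_lt (by omega)
    rw [this]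
    simp
  | succ j ih =>
    rw [Finset.sum_range_succ, ih, step ((j + 1 : ℕ) : ℤ), add_comm,
      show ((j + 1 : ℕ) : ℤ) + i + 1 - c = (j : ℤ) + i + 2 - c by push_cast; ring]

theorem Lz_succ (n : ℕ) (m : ℕ → ℤ) (hm : ∀ i, 0 ≤ m (i + 1)) (j : ℕ) :
    Lz (n + 1) m j = ∑ t ∈ Finset.range (j + 1), Lz n (fun i => m (i + 1)) t
      + ((((j : ℤ) + 1 - m 1).toNat : ℤ) - (((j : ℤ) + 1 - m 0).toNat : ℤ)) := by
  unfold Lz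
  rw [Finset.sum_range_succ', Finset.sum_comm]
  simp only [Finset.sum_sub_distrib]
  simp only [← Nat.cast_sum, hockey _ _ (hm _)]
  have e : ∀ i : ℕ, ((j : ℤ) + ((i + 1 : ℕ) : ℤ) + 1) = (j : ℤ) + i + 2 := by
    intro i; push_cast; ring
  simp only [e]
  simp

theorem Pq_sub_first (n : ℕ) (m m' : ℕ → ℤ) (h : ∀ i, m (i + 1) = m' (i + 1)) (x : ℚ) :
    Pq (n + 1) m x = Pq (n + 1) m' x + (m 0 - m' 0) := by
  unfold Pq
  rw [Finset.sum_range_succ', Finset.sum_range_succ']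
  simp only [h, zero_add, bq_one]
  push_cast
  ring

theorem Pq_eq_sum (n : ℕ) (m : ℕ → ℤ) (hn : m (n + 1) = 0) (hm : ∀ i, 0 ≤ m (i + 1))
    (hanti : ∀ i, m (i + 2) ≤ m (i + 1)) (j : ℕ) (hj : m 1 ≤ j) :
    Pq (n + 1) m j = ((∑ t ∈ Finset.range (j + 1), Lz n (fun i => m (i + 1)) t
      + (m 0 - m 1) : ℤ) : ℚ) := by
  let m' : ℕ → ℤ := fun i => if i = 0 then m 1 else m i
  have h1 : ∀ i, m' (i + 1) = m (i + 1) := fun i => by simp [m']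
  have h0 : m' 0 = m 1 := by simp [m']
  have hle : ∀ i, m' i ≤ m 1 := by
    have : ∀ i, m (i + 1) ≤ m 1 := by
      intro i
      induction i with
      | zero => exact le_rfl
      | succ i ih => exact (hanti i).trans ih
    intro i
    rcases i with _ | i
    · exact h0.le
    · rw [h1]; exact this i
  rw [Pq_sub_first n m m' (fun i => (h1 i).symm), ← Lz_eq_Pq (n + 1) m' (by rw [h1, hn]) j
    (fun i => by have := hle i; omega), Lz_succ n m' (fun i => by rw [h1]; exact hm i), h0]
  rw [show m' 1 = m 1 from h1 0]
  simp only [h1]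
  push_cast
  ring

theorem numeric_step (h L : ℕ → ℤ) (a b : ℤ) (ha : 0 ≤ a) (hle : ∀ j, L j ≤ h j)
    (hpers : ∀ j : ℕ, a ≤ j → h j = L j → ∀ i, j ≤ i → h i = L i)
    (N : ℕ) (hD : ∀ j, N ≤ j → ∑ t ∈ Finset.range (j + 1), (h t - L t) = b - a) :
    a ≤ b ∧ (∀ j : ℕ, (((j : ℤ) + 1 - a).toNat : ℤ) - (((j : ℤ) + 1 - b).toNat : ℤ) ≤
        ∑ t ∈ Finset.range (j + 1), (h t - L t)) ∧
      ∀ j : ℕ, b ≤ j → ∑ t ∈ Finset.range (j + 1), (h t - L t) = b - a →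
        ∃ i, i ≤ j ∧ a ≤ i ∧ h i = L i := by
  have hab : a ≤ b := by
    have := Finset.sum_nonneg (s := Finset.range (N + 1)) (f := fun t => h t - L t)
      (fun t _ => sub_nonneg.mpr (hle t))
    rw [hD N le_rfl] at this
    omega
  have hstrict : ∀ j : ℕ, (¬ ∃ i, i ≤ j ∧ a ≤ i ∧ h i = L i) →
      (((j : ℤ) + 1 - a).toNat : ℤ) ≤ ∑ t ∈ Finset.range (j + 1), (h t - L t) := by
    intro j
    induction j with
    | zero =>
      intro hno
      simp only [zero_add, Finset.sum_range_one]
      by_cases h0 : a ≤ 0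
      · have : h 0 ≠ L 0 := fun e => hno ⟨0, le_rfl, by simpa using h0, e⟩
        have := hle 0
        simp only [Nat.cast_zero]
        omega
      · have := hle 0
        simp only [Nat.cast_zero]
        omega
    | succ j ih =>
      intro hno
      have ih' := ih (fun ⟨i, hi, hi2⟩ => hno ⟨i, by omega, hi2⟩)
      rw [Finset.sum_range_succ]
      have h3 := hle (j + 1)
      by_cases h0 : a ≤ ((j + 1 : ℕ) : ℤ)
      · have : h (j + 1) ≠ L (j + 1) := fun e => hno ⟨j + 1, le_rfl, h0, e⟩
        push_cast at h0 ⊢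
        omega
      · push_cast at h0 ⊢
        omega
  refine ⟨hab, ?_, ?_⟩
  · intro j
    by_cases hex : ∃ i, i ≤ j ∧ a ≤ i ∧ h i = L i
    · obtain ⟨i, hij, hai, hi⟩ := hex
      have hconst : ∀ s, ∑ t ∈ Finset.range (j + s + 1), (h t - L t)
          = ∑ t ∈ Finset.range (j + 1), (h t - L t) := by
        intro s
        induction s with
        | zero => rfl
        | succ s ih =>
          rw [show j + (s + 1) + 1 = (j + s + 1) + 1 by ring, Finset.sum_range_succ, ih,
            hpers i hai hi (j + s + 1) (by omega)]
          ring
      rw [← hconst N, hD (j + N) (by omega)]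
      omega
    · have := hstrict j hex
      omega
  · intro j hj hs
    by_contra hex
    have := hstrict j hex
    omega

end Numerics
section MainInduction

open scoped TensorProduct

variable {K R : Type*} [Field K] [CommRing R] [Algebra K R] (A : ℕ → Submodule K R)

/-- Hilbert function of `R / I`. -/
noncomputable def hilb (I : Ideal R) (j : ℕ) : ℤ :=
  (Module.finrank K (A j) : ℤ) - (Module.finrank K (gpart A I j) : ℤ)

theorem gpart_le (I : Ideal R) (j : ℕ) : gpart A I j ≤ A j := inf_le_left

theorem gpart_mono {I I' : Ideal R} (h : I ≤ I') (j : ℕ) : gpart A I j ≤ gpart A I' j :=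
  inf_le_inf_left _ h

theorem hilb_congr {I I' : Ideal R} {j : ℕ} (h : gpart A I j = gpart A I' j) :
    hilb A I j = hilb A I' j := by
  unfold hilb; rw [h]

theorem gpart_fin [∀ i, FiniteDimensional K (A i)] (I : Ideal R) (j : ℕ) :
    FiniteDimensional K (gpart A I j) :=
  Submodule.finiteDimensional_of_le (gpart_le A I j)

theorem hilb_anti [∀ i, FiniteDimensional K (A i)] {I I' : Ideal R} (h : I ≤ I') (j : ℕ) :
    hilb A I' j ≤ hilb A I j := by
  have := gpart_fin A I' j
  have := Submodule.finrank_mono (gpart_mono A h j)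
  unfold hilb
  omega

theorem hilb_nonneg [∀ i, FiniteDimensional K (A i)] (I : Ideal R) (j : ℕ) :
    0 ≤ hilb A I j := by
  have := Submodule.finrank_mono (gpart_le A I j)
  unfold hilb
  omega

theorem gpart_eq_of_hilb_eq [∀ i, FiniteDimensional K (A i)] {I I' : Ideal R} (h : I ≤ I') {j : ℕ}
    (e : hilb A I j = hilb A I' j) : gpart A I j = gpart A I' j := by
  have := gpart_fin A I' j
  refine Submodule.eq_of_le_of_finrank_eq (gpart_mono A h j) ?_
  unfold hilb at e
  omega

variable [GradedAlgebra A]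

theorem mem_sup_span {I : Ideal R} (hI : I.IsHomogeneous A) {l : R} (hl : l ∈ A 1) {j : ℕ} {x : R}
    (hx : x ∈ gpart A (I ⊔ Ideal.span {l}) (j + 1)) :
    ∃ a ∈ gpart A I (j + 1), ∃ b ∈ A j, x = a + l * b := by
  obtain ⟨a, ha, b, hb, hab⟩ := Submodule.mem_sup.mp hx.2
  obtain ⟨s, rfl⟩ := Ideal.mem_span_singleton'.mp hb
  refine ⟨DirectSum.decompose A a (j + 1), ⟨Subtype.mem _, hI _ ha⟩,
    DirectSum.decompose A s j, Subtype.mem _, ?_⟩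
  rw [← DirectSum.decompose_of_mem_same A hx.1, ← hab, DirectSum.decompose_add, mul_comm l,
    ← DirectSum.coe_decompose_mul_add_of_right_mem A hl]
  rfl

theorem sup_span_zero {I : Ideal R} (hI : I.IsHomogeneous A) {l : R} (hl : l ∈ A 1) :
    gpart A (I ⊔ Ideal.span {l}) 0 = gpart A I 0 := by
  refine le_antisymm ?_ (gpart_mono A le_sup_left 0)
  intro x hx
  refine ⟨hx.1, ?_⟩
  obtain ⟨a, ha, b, hb, hab⟩ := Submodule.mem_sup.mp hx.2
  obtain ⟨s, rfl⟩ := Ideal.mem_span_singleton'.mp hb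
  have : x = DirectSum.decompose A a 0 := by
    rw [← DirectSum.decompose_of_mem_same A hx.1, ← hab, DirectSum.decompose_add]
    have h0 : (DirectSum.decompose A (s * l) 0 : R) = 0 :=
      DirectSum.coe_decompose_mul_of_right_mem_of_not_le A hl (by omega)
    have h0' : DirectSum.decompose A (s * l) 0 = 0 := by exact_mod_cast h0
    rw [DirectSum.add_apply, h0', add_zero]
  rw [this]
  exact hI 0 ha

theorem hilb_sup_succ [∀ i, FiniteDimensional K (A i)] {I : Ideal R} (hI : I.IsHomogeneous A)
    {l : R} (hl : l ∈ A 1) (hreg : ∀ x, l * x ∈ I → x ∈ I) (j : ℕ) :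
    hilb A (I ⊔ Ideal.span {l}) (j + 1) = hilb A I (j + 1) - hilb A I j := by
  have := gpart_fin A (I ⊔ Ideal.span {l}) (j + 1)
  let q : R →ₗ[K] (R ⧸ I) := (Ideal.Quotient.mkₐ K I).toLinearMap
  have hq : ∀ x, q x = 0 ↔ x ∈ I := fun x => Ideal.Quotient.eq_zero_iff_mem
  have h1 := finrank_map_add_inf_ker (q ∘ₗ LinearMap.mulLeft K l) (A j)
  have h2 := finrank_map_add_inf_ker q (gpart A (I ⊔ Ideal.span {l}) (j + 1))
  have e1 : A j ⊓ LinearMap.ker (q ∘ₗ LinearMap.mulLeft K l) = gpart A I j := by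
    ext x
    simp only [Submodule.mem_inf, LinearMap.mem_ker, LinearMap.comp_apply, LinearMap.mulLeft_apply,
      hq, mem_gpart]
    exact and_congr_right fun _ => ⟨hreg x, fun h => I.mul_mem_left _ h⟩
  have e2 : gpart A (I ⊔ Ideal.span {l}) (j + 1) ⊓ LinearMap.ker q = gpart A I (j + 1) := by
    ext x
    simp only [Submodule.mem_inf, LinearMap.mem_ker, hq, mem_gpart]
    exact ⟨fun h => ⟨h.1.1, h.2⟩, fun h => ⟨⟨h.1, Ideal.mem_sup_left h.2⟩, h.2⟩⟩
  have e3 : (A j).map (q ∘ₗ LinearMap.mulLeft K l)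
      = (gpart A (I ⊔ Ideal.span {l}) (j + 1)).map q := by
    ext y
    constructor
    · rintro ⟨x, hx, rfl⟩
      refine ⟨l * x, ⟨?_, ?_⟩, rfl⟩
      · rw [add_comm]; exact SetLike.mul_mem_graded hl hx
      · exact Ideal.mem_sup_right (Ideal.mul_mem_right _ _ (Ideal.mem_span_singleton_self l))
    · rintro ⟨x, hx, rfl⟩
      obtain ⟨a, ha, b, hb, rfl⟩ := mem_sup_span A hI hl hx
      refine ⟨b, hb, ?_⟩
      rw [map_add, (hq a).mpr ha.2, zero_add]
      rfl
  rw [e1, e3] at h1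
  rw [e2] at h2
  unfold hilb
  omega

theorem hilb_eq_sum [∀ i, FiniteDimensional K (A i)] {I : Ideal R} (hI : I.IsHomogeneous A)
    {l : R} (hl : l ∈ A 1) (hreg : ∀ x, l * x ∈ I → x ∈ I) (j : ℕ) :
    hilb A I j = ∑ t ∈ Finset.range (j + 1), hilb A (I ⊔ Ideal.span {l}) t := by
  induction j with
  | zero => simp [hilb_congr A (sup_span_zero A hI hl)]
  | succ j ih =>
    rw [Finset.sum_range_succ, ← ih, hilb_sup_succ A hI hl hreg]
    ring

theorem gen_lift {I : Ideal R} (hI : I.IsHomogeneous A) {l : R} (hl : l ∈ A 1)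
    (hreg : ∀ x, l * x ∈ I → x ∈ I) (i : ℕ)
    (h : gpart A (I ⊔ Ideal.span {l}) (i + 1) ≤ A 1 * gpart A (I ⊔ Ideal.span {l}) i) :
    gpart A I (i + 1) ≤ A 1 * gpart A I i := by
  have key : A 1 * gpart A (I ⊔ Ideal.span {l}) i ≤
      A 1 * gpart A I i ⊔ (A i).map (LinearMap.mulLeft K l) := by
    rw [Submodule.mul_le]
    intro v hv x hx
    rcases i with _ | i
    · rw [sup_span_zero A hI hl] at hx
      exact Submodule.mem_sup_left (Submodule.mul_mem_mul hv hx)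
    · obtain ⟨a, ha, b, hb, rfl⟩ := mem_sup_span A hI hl hx
      rw [mul_add]
      refine add_mem (Submodule.mem_sup_left (Submodule.mul_mem_mul hv ha))
        (Submodule.mem_sup_right ⟨v * b, ?_, ?_⟩)
      · rw [add_comm]; exact SetLike.mul_mem_graded hv hb
      · simp only [LinearMap.mulLeft_apply]; ring
  intro x hx
  have hx' := key (h (gpart_mono A le_sup_left _ hx))
  obtain ⟨g, hg, y, ⟨b, hb, rfl⟩, hgy⟩ := Submodule.mem_sup.mp hx'
  simp only [LinearMap.mulLeft_apply] at hgy
  have hgI : g ∈ I := by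
    have : A 1 * gpart A I i ≤ I.restrictScalars K := by
      rw [Submodule.mul_le]
      intro v _ z hz
      exact I.mul_mem_left _ hz.2
    exact this hg
  have hbI : b ∈ I := by
    apply hreg
    have : l * b = x - g := by rw [← hgy]; ring
    rw [this]
    exact I.sub_mem hx.2 hgI
  rw [← hgy]
  exact add_mem hg (Submodule.mul_mem_mul hl ⟨hb, hbI⟩)

theorem main_induction [IsNoetherianRing R] [Infinite K] [∀ i, FiniteDimensional K (A i)]
    (hstd : ∀ i, A (i + 1) ≤ A 1 * A i) (n : ℕ) :
    ∀ (m : ℕ → ℤ), (∀ i, n ≤ i → m i = 0) → ∀ I : Ideal R, I.IsHomogeneous A →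
      (∃ N, ∀ j, N ≤ j → (hilb A I j : ℚ) = Pq n m j) →
      (∀ i, m (i + 1) ≤ m i) ∧ (∀ j, Lz n m j ≤ hilb A I j) ∧
      ∀ j : ℕ, m 0 ≤ j → hilb A I j = Lz n m j → ∀ i, j ≤ i →
        gpart A I (i + 1) ≤ A 1 * gpart A I i ∧ hilb A I i = Lz n m i := by
  induction n with
  | zero =>
    intro m hm I hI _
    refine ⟨fun i => by rw [hm _ (Nat.zero_le _), hm _ (Nat.zero_le _)],
      fun j => by simpa [Lz] using hilb_nonneg A I j, ?_⟩
    intro j _ hj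
    have hL : ∀ i, Lz 0 m i = 0 := fun i => by simp [Lz]
    have htop : ∀ i, gpart A ⊤ i = A i := fun i => by
      ext x; simp [mem_gpart]
    have hfull : ∀ i, j ≤ i → gpart A I i = A i := by
      intro i hi
      induction i, hi using Nat.le_induction with
      | base =>
        rw [← htop j]
        apply gpart_eq_of_hilb_eq A le_top
        rw [hj, hL]
        unfold hilb
        rw [htop]
        ring
      | succ i hi ih =>
        refine le_antisymm (gpart_le A I _) ?_
        intro x hx
        refine ⟨hx, ?_⟩
        have h2 : A 1 * A i ≤ I.restrictScalars K := by
          rw [Submodule.mul_le]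
          intro v _ z hz
          rw [← ih] at hz
          exact I.mul_mem_left _ hz.2
        exact h2 (hstd i hx)
    intro i hi
    refine ⟨?_, ?_⟩
    · rw [hfull _ hi, hfull _ (by omega)]
      exact hstd i
    · unfold hilb
      rw [hfull _ hi, hL]
      ring
  | succ n ih =>
    rintro m hm I hI ⟨N, hN⟩
    obtain ⟨I', hI', hle, ⟨N', hN'⟩, hsat⟩ := sat_exists A hstd I hI
    obtain ⟨l, hl, hreg⟩ := exists_regular A I' hsat
    set J := I' ⊔ Ideal.span {l} with hJ
    have hJh : J.IsHomogeneous A := hI'.sup (Ideal.homogeneous_span A _ (by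
      rintro y rfl; exact ⟨1, hl⟩))
    have hsum := hilb_eq_sum A hI' hl hreg
    have hev : ∀ j, max N N' ≤ j → (hilb A I' j : ℚ) = Pq (n + 1) m j := by
      intro j hj
      rw [← hN j (by omega)]
      rw [hilb_congr A (le_antisymm (hN' j (by omega)) (gpart_mono A hle j))]
    obtain ⟨hanti, hlow, hpers⟩ := ih (fun i => m (i + 1)) (fun i hi => hm _ (by omega)) J hJh
      ⟨max N N' + 1, fun j hj => by
        obtain ⟨j, rfl⟩ : ∃ t, j = t + 1 := ⟨j - 1, by omega⟩
        rw [hilb_sup_succ A hI' hl hreg]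
        push_cast
        rw [← Pq_diff, hev j (by omega)]
        have := hev (j + 1) (by omega)
        push_cast at this
        rw [this]⟩
    have hnonneg : ∀ i, 0 ≤ m (i + 1) := by
      have : ∀ s i, n ≤ s + i → 0 ≤ m (i + 1) := by
        intro s
        induction s with
        | zero => intro i hi; rw [hm _ (by omega)]
        | succ s ihs => intro i hi; exact (ihs (i + 1) (by omega)).trans (hanti i)
      intro i
      exact this n i (by omega)
    set L' : ℕ → ℤ := Lz n (fun i => m (i + 1)) with hL'
    have hD : ∀ j, max (max N N') (m 1).toNat ≤ j →
        ∑ t ∈ Finset.range (j + 1), (hilb A J t - L' t) = m 0 - m 1 := by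
      intro j hj
      have h1 := hev j (by omega)
      rw [Pq_eq_sum n m (hm _ le_rfl) hnonneg hanti j (by omega), hsum] at h1
      have h2 : ∑ t ∈ Finset.range (j + 1), hilb A J t =
        ∑ t ∈ Finset.range (j + 1), L' t + (m 0 - m 1) := by exact_mod_cast h1
      rw [Finset.sum_sub_distrib, h2]
      ring
    obtain ⟨hab, hn2, hn3⟩ := numeric_step (hilb A J) L' (m 1) (m 0) (hnonneg 0) hlow
      (fun j hj he i hi => (hpers j hj he i hi).2) _ hD
    have hLs := Lz_succ n m hnonneg
    have hlow' : ∀ j, Lz (n + 1) m j ≤ hilb A I' j := by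
      intro j
      have := hn2 j
      rw [Finset.sum_sub_distrib] at this
      rw [hLs, hsum]
      linarith
    refine ⟨?_, fun j => (hlow' j).trans (hilb_anti A hle j), ?_⟩
    · intro i
      rcases i with _ | i
      · exact hab
      · exact hanti i
    · intro j hj he
      have he' : hilb A I' j = Lz (n + 1) m j :=
        le_antisymm ((hilb_anti A hle j).trans he.le) (hlow' j)
      have hclamp : ∀ i, j ≤ i → Lz (n + 1) m i =
          ∑ t ∈ Finset.range (i + 1), L' t + (m 0 - m 1) := by
        intro i hi
        rw [hLs]
        congr 1
        omega
      obtain ⟨i0, hi0, hai0, heq⟩ := hn3 j hj (by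
        rw [Finset.sum_sub_distrib, ← hsum, he', hclamp j le_rfl]
        ring)
      have hall := hpers i0 hai0 heq
      have hgen' : ∀ i, j ≤ i → gpart A I' (i + 1) ≤ A 1 * gpart A I' i := fun i hi =>
        gen_lift A hI' hl hreg i (hall i (by omega)).1
      have hval : ∀ i, j ≤ i → hilb A I' i = Lz (n + 1) m i := by
        intro i hi
        induction i, hi using Nat.le_induction with
        | base => exact he'
        | succ i hi ihi =>
          rw [hclamp i hi, hsum] at ihi
          rw [hclamp (i + 1) (by omega), hsum, Finset.sum_range_succ, ihi,
            Finset.sum_range_succ _ (i + 1), (hall (i + 1) (by omega)).2]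
          ring
      have hgp : ∀ i, j ≤ i → gpart A I i = gpart A I' i := by
        intro i hi
        induction i, hi using Nat.le_induction with
        | base => exact gpart_eq_of_hilb_eq A hle (he.trans he'.symm)
        | succ i hi ihi =>
          refine le_antisymm (gpart_mono A hle _) ?_
          intro x hx
          refine ⟨hx.1, ?_⟩
          have h2 : A 1 * gpart A I' i ≤ I.restrictScalars K := by
            rw [← ihi, Submodule.mul_le]
            intro v _ z hz
            exact I.mul_mem_left _ hz.2
          exact h2 (hgen' i hi hx)
      intro i hi
      rw [hilb_congr A (hgp i hi), hgp i hi, hgp (i + 1) (by omega)]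
      exact ⟨hgen' i hi, hval i hi⟩

/-- The forward direction, over an arbitrary field. -/
theorem forward_dir {k R : Type*} [Field k] [CommRing R] [Algebra k R] (A : ℕ → Submodule k R)
    [GradedAlgebra A] (hfin : ∀ i, FiniteDimensional k (A i))
    (hgen : Algebra.adjoin k ((A 1 : Submodule k R) : Set R) = ⊤) (n : ℕ) (m : ℕ → ℤ)
    (hm : ∀ i, n ≤ i → m i = 0)
    (hP : ∃ N, ∀ j, N ≤ j → (Module.finrank k (A j) : ℚ) = Pq n m j) (i : ℕ) :
    m (i + 1) ≤ m i := by
  let K := AlgebraicClosure k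
  let S := TensorProduct k K R
  let B : ℕ → Submodule K S := fun i => (A i).baseChange K
  have hr : ∀ i, Module.finrank K (B i) = Module.finrank k (A i) := by
    intro i
    rw [← (Submodule.toBaseChange.toLinearEquiv K (A i)).finrank_eq]
    exact Module.finrank_baseChange
  have hf : ∀ i, FiniteDimensional K (B i) := by
    intro i
    have := hfin i
    exact (Submodule.toBaseChange.toLinearEquiv K (A i)).finiteDimensional
  have hg : Algebra.adjoin K ((B 1 : Submodule K S) : Set S) = ⊤ := by
    have h1 : ∀ r : R, (1 : K) ⊗ₜ[k] r ∈ Algebra.adjoin K ((B 1 : Submodule K S) : Set S) := by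
      intro r
      have hr : r ∈ Algebra.adjoin k ((A 1 : Submodule k R) : Set R) := by rw [hgen]; trivial
      induction hr using Algebra.adjoin_induction with
      | mem x hx => exact Algebra.subset_adjoin (Submodule.tmul_mem_baseChange_of_mem 1 hx)
      | algebraMap c =>
        rw [Algebra.algebraMap_eq_smul_one, TensorProduct.tmul_smul, TensorProduct.smul_tmul']
        rw [← mul_one (c • (1 : K)), ← smul_eq_mul, ← TensorProduct.smul_tmul']
        exact Subalgebra.smul_mem _ (one_mem _) _
      | add x y _ _ hx hy =>
        rw [TensorProduct.tmul_add]
        exact add_mem hx hy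
      | mul x y _ _ hx hy =>
        have := mul_mem hx hy
        rwa [Algebra.TensorProduct.tmul_mul_tmul, mul_one] at this
    rw [eq_top_iff]
    rintro x -
    induction x using TensorProduct.induction_on with
    | zero => exact zero_mem _
    | tmul c r =>
      rw [← mul_one c, ← smul_eq_mul, ← TensorProduct.smul_tmul']
      exact Subalgebra.smul_mem _ (h1 r) _
    | add x y hx hy => exact add_mem hx hy
  have hft : Algebra.FiniteType K S := by
    obtain ⟨s, hs⟩ := (Submodule.fg_iff_finiteDimensional (B 1)).mpr (hf 1)
    refine ⟨⟨s, ?_⟩⟩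
    rw [← hg, ← hs, Algebra.adjoin_span]
  have hnoeth : IsNoetherianRing S := Algebra.FiniteType.isNoetherianRing K S
  have hinf : Infinite K := IsAlgClosed.instInfinite
  refine (main_induction B (std_mul B hg) n m hm ⊥ (Ideal.IsHomogeneous.bot B) ?_).1 i
  obtain ⟨N, hN⟩ := hP
  refine ⟨N, fun j hj => ?_⟩
  have : gpart B ⊥ j = ⊥ := by
    ext x
    simp only [mem_gpart, Submodule.mem_bot]
    exact ⟨fun h => h.2, fun h => ⟨by rw [h]; exact zero_mem _, h⟩⟩
  unfold hilb
  rw [this, finrank_bot, hr]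
  simpa using hN j hj

end MainInduction
section QuotientGrading

theorem quot_graded {K R : Type*} [Field K] [CommRing R] [Algebra K R] (A : ℕ → Submodule K R)
    [GradedAlgebra A] (I : Ideal R) (hI : I.IsHomogeneous A) :
    Nonempty (GradedAlgebra fun i => (A i).map (Ideal.Quotient.mkₐ K I).toLinearMap) := by
  classical
  set q : R →ₗ[K] (R ⧸ I) := (Ideal.Quotient.mkₐ K I).toLinearMap with hq
  have hq0 : ∀ x, q x = 0 ↔ x ∈ I := fun x => Ideal.Quotient.eq_zero_iff_mem
  let C : ℕ → Submodule K (R ⧸ I) := fun i => (A i).map q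
  have hC : SetLike.GradedMonoid C :=
    { one_mem := ⟨1, SetLike.GradedOne.one_mem, by simp [hq]⟩
      mul_mem := by
        rintro i j _ _ ⟨x, hx, rfl⟩ ⟨y, hy, rfl⟩
        exact ⟨x * y, SetLike.mul_mem_graded hx hy, by simp [hq]⟩ }
  have hint : DirectSum.IsInternal C := by
    let ψ : (DirectSum ℕ fun i => A i) →ₗ[K] (DirectSum ℕ fun i => C i) :=
      DirectSum.lmap (fun i => q.submoduleMap (A i))
    have hψ : Function.Surjective ψ :=
      (DirectSum.lmap_surjective _).mpr fun i => q.submoduleMap_surjective (A i)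
    have hcomp : ∀ z, DirectSum.coeLinearMap C (ψ z) = q (DirectSum.coeLinearMap A z) := by
      intro z
      induction z using DirectSum.induction_on with
      | zero => simp
      | of i x =>
        have : ψ (DirectSum.of (fun i => A i) i x) =
            DirectSum.of (fun i => C i) i (q.submoduleMap (A i) x) := DirectSum.lmap_of _ _ _
        rw [this, DirectSum.coeLinearMap_of, DirectSum.coeLinearMap_of]
        rfl
      | add x y hx hy => simp only [map_add, hx, hy]
    have hdec : ∀ x : R, DirectSum.coeLinearMap A (DirectSum.decompose A x) = x := fun x =>
      DirectSum.Decomposition.left_inv x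
    have hdec' : ∀ z, DirectSum.decompose A (DirectSum.coeLinearMap A z) = z := fun z =>
      DirectSum.Decomposition.right_inv z
    constructor
    · rw [injective_iff_map_eq_zero]
      intro w hw
      obtain ⟨z, rfl⟩ := hψ w
      have h1 : q (DirectSum.coeLinearMap A z) = 0 := by
        rw [← hcomp]; exact hw
      rw [hq0] at h1
      ext i
      have h2 := hI i h1
      rw [hdec'] at h2
      exact (hq0 _).mpr h2
    · intro y
      obtain ⟨x, rfl⟩ := Ideal.Quotient.mk_surjective y
      refine ⟨ψ (DirectSum.decompose A x), ?_⟩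
      have := hcomp (DirectSum.decompose A x)
      rw [hdec] at this
      exact this
  exact ⟨hint.gradedAlgebra⟩

attribute [local instance] MvPolynomial.gradedAlgebra

/-- A family of monomials closed under divisors yields a standard graded algebra. -/
theorem monomial_algebra (f : ℚ[X]) (C : Set (ℕ →₀ ℕ)) (hC : IsLowerSet C)
    (T : ℕ → Finset (ℕ →₀ ℕ)) (hT : ∀ j α, α ∈ T j ↔ α ∈ C ∧ α.degree = j)
    (hf : ∃ N, ∀ j, N ≤ j → ((T j).card : ℚ) = f.eval (j : ℚ)) : IsHilbertPolynomial f := by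
  classical
  let A : ℕ → Submodule ℚ (MvPolynomial ℕ ℚ) := MvPolynomial.homogeneousSubmodule ℕ ℚ
  let I : Ideal (MvPolynomial ℕ ℚ) := MvPolynomial.restrictSupportIdeal ℚ Cᶜ hC.compl
  have hIm : ∀ p, p ∈ I ↔ ∀ α ∈ C, p.coeff α = 0 := by
    intro p
    have : p ∈ I ↔ (p.support : Set (ℕ →₀ ℕ)) ⊆ Cᶜ := Iff.rfl
    rw [this]
    constructor
    · intro h α hα
      by_contra h0
      exact h (MvPolynomial.mem_support_iff.mpr h0) hα
    · intro h α hα hαC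
      exact MvPolynomial.mem_support_iff.mp hα (h α hαC)
  have hI : I.IsHomogeneous A := by
    intro i p hp
    have e : (DirectSum.decompose A p i : MvPolynomial ℕ ℚ)
      = MvPolynomial.homogeneousComponent i p := MvPolynomial.decomposition.decompose'_apply p i
    rw [e, hIm]
    intro α hα
    rw [MvPolynomial.coeff_homogeneousComponent]
    split_ifs
    · exact (hIm p).mp hp α hα
    · rfl
  obtain ⟨inst⟩ := quot_graded A I hI
  set q : MvPolynomial ℕ ℚ →ₗ[ℚ] (MvPolynomial ℕ ℚ ⧸ I) :=
    (Ideal.Quotient.mkₐ ℚ I).toLinearMap with hq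
  have hq0 : ∀ x, q x = 0 ↔ x ∈ I := fun x => Ideal.Quotient.eq_zero_iff_mem
  have hspan : ∀ j, (A j).map q = Submodule.span ℚ
      (Set.range fun α : T j => q (MvPolynomial.monomial α.1 1)) := by
    intro j
    apply le_antisymm
    · rintro _ ⟨p, hp, rfl⟩
      rw [p.as_sum, map_sum]
      refine Submodule.sum_mem _ fun α hα => ?_
      have hdeg : α.degree = j := by
        have h1 : p.IsHomogeneous j := hp
        have := h1 (MvPolynomial.mem_support_iff.mp hα)
        rw [Finsupp.degree_eq_weight_one]
        exact this
      have e : MvPolynomial.monomial α (p.coeff α)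
          = (p.coeff α) • MvPolynomial.monomial α (1 : ℚ) := by
        rw [MvPolynomial.smul_monomial, smul_eq_mul, mul_one]
      rw [e, map_smul]
      refine Submodule.smul_mem _ _ ?_
      by_cases hαC : α ∈ C
      · exact Submodule.subset_span ⟨⟨α, (hT j α).mpr ⟨hαC, hdeg⟩⟩, rfl⟩
      · have : q (MvPolynomial.monomial α 1) = 0 := by
          rw [hq0, hIm]
          intro β hβ
          rw [MvPolynomial.coeff_monomial, if_neg]
          rintro rfl
          exact hαC hβ
        rw [this]
        exact zero_mem _
    · rw [Submodule.span_le]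
      rintro _ ⟨α, rfl⟩
      refine ⟨_, MvPolynomial.isHomogeneous_monomial _ ?_, rfl⟩
      exact ((hT j α.1).mp α.2).2
  have hli : ∀ j, LinearIndependent ℚ (fun α : T j => q (MvPolynomial.monomial α.1 1)) := by
    intro j
    rw [Fintype.linearIndependent_iff]
    intro g hg β
    have h1 : q (∑ α : T j, g α • MvPolynomial.monomial α.1 (1 : ℚ)) = 0 := by
      rw [map_sum, ← hg]
      simp only [map_smul]
    rw [hq0, hIm] at h1
    have h2 := h1 β.1 ((hT j β.1).mp β.2).1
    rw [MvPolynomial.coeff_sum] at h2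
    rw [Finset.sum_eq_single β] at h2
    · simpa [MvPolynomial.coeff_smul, MvPolynomial.coeff_monomial] using h2
    · intro α _ hα
      rw [MvPolynomial.coeff_smul, MvPolynomial.coeff_monomial, if_neg, smul_zero]
      exact fun h => hα (Subtype.ext h)
    · simp
  obtain ⟨N, hN⟩ := hf
  refine ⟨ℚ, MvPolynomial ℕ ℚ ⧸ I, inferInstance, inferInstance, inferInstance,
    fun i => (A i).map q, inst, ?_, ?_, N, ?_⟩
  · intro i
    change FiniteDimensional ℚ ((A i).map q : Submodule ℚ (MvPolynomial ℕ ℚ ⧸ I))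
    rw [hspan i]
    exact FiniteDimensional.span_of_finite ℚ (Set.finite_range _)
  · have h1 : Algebra.adjoin ℚ ((A 1 : Submodule ℚ (MvPolynomial ℕ ℚ)) : Set (MvPolynomial ℕ ℚ)) = ⊤ := by
      rw [eq_top_iff, ← MvPolynomial.adjoin_range_X]
      apply Algebra.adjoin_mono
      rintro _ ⟨i, rfl⟩
      exact MvPolynomial.isHomogeneous_X _ _
    have h2 : (((A 1).map q : Submodule ℚ (MvPolynomial ℕ ℚ ⧸ I)) : Set (MvPolynomial ℕ ℚ ⧸ I)) =
        (Ideal.Quotient.mkₐ ℚ I) '' (A 1 : Set (MvPolynomial ℕ ℚ)) := rfl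
    rw [h2, ← AlgHom.map_adjoin, h1, Algebra.map_top, AlgHom.range_eq_top]
    exact Ideal.Quotient.mkₐ_surjective ℚ I
  · intro j hj
    rw [← hN j hj]
    change ((Module.finrank ℚ ((A j).map q : Submodule ℚ (MvPolynomial ℕ ℚ ⧸ I)) : ℕ) : ℚ) = _
    rw [hspan j, finrank_span_eq_card (hli j)]
    simp

end QuotientGrading

section Combinatorics

theorem hockey2 (p : ℕ) (x : ℚ) :
    ∑ i ∈ Finset.range (p + 1), bq i (x + i) = bq p (x + p + 1) := by
  induction p with
  | zero => simp [bq_zero]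
  | succ p ih =>
    rw [Finset.sum_range_succ, ih]
    push_cast
    rw [show x + ((p : ℚ) + 1) + 1 = (x + p + 1) + 1 by ring, bq_pascal,
      show x + ((p : ℚ) + 1) = x + p + 1 by ring]
    ring

theorem Pq_shift (n p : ℕ) (hp : p + 1 ≤ n) (m : ℕ → ℕ) (h1 : ∀ i, i ≤ p → 0 < m i)
    (h2 : ∀ i, p < i → m i = 0) (x : ℚ) :
    Pq n (fun i => (m i : ℤ)) (x + 1) = bq p (x + p + 1) + Pq n (fun i => ((m i - 1 : ℕ) : ℤ)) x := by
  rw [← hockey2, ← sub_eq_iff_eq_add]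
  unfold Pq
  rw [← Finset.sum_sub_distrib]
  obtain ⟨r, rfl⟩ := Nat.exists_eq_add_of_le hp
  rw [Finset.sum_range_add]
  have hz : ∀ i ∈ Finset.range r, (bq (p + 1 + i + 1) (x + 1 + ((p + 1 + i : ℕ) : ℚ)) -
      bq (p + 1 + i + 1) (x + 1 + ((p + 1 + i : ℕ) : ℚ) - ((m (p + 1 + i) : ℤ) : ℚ)) -
      (bq (p + 1 + i + 1) (x + ((p + 1 + i : ℕ) : ℚ)) -
      bq (p + 1 + i + 1) (x + ((p + 1 + i : ℕ) : ℚ) - (((m (p + 1 + i) - 1 : ℕ) : ℤ) : ℚ)))) = 0 := by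
    intro i _
    rw [h2 _ (by omega)]
    simp
  rw [Finset.sum_eq_zero hz, add_zero]
  refine Finset.sum_congr rfl fun i hi => ?_
  have hmi := h1 i (by simp at hi; omega)
  obtain ⟨c, hc⟩ : ∃ c, m i = c + 1 := ⟨m i - 1, by omega⟩
  beta_reduce
  rw [hc]
  simp only [Nat.add_sub_cancel]
  push_cast
  rw [show x + 1 + i - ((c : ℚ) + 1) = x + i - c by ring, show x + 1 + (i : ℚ) = (x + i) + 1 by ring,
    bq_pascal]
  ring

theorem exists_order (n s : ℕ) : ∀ m : ℕ → ℕ, Antitone m → m 0 ≤ s → m n = 0 →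
    ∃ C : Set (ℕ →₀ ℕ), IsLowerSet C ∧ (∀ e, m e = 0 → ∀ α ∈ C, ∀ i, e < i → α i = 0) ∧
      ∃ T : ℕ → Finset (ℕ →₀ ℕ), (∀ j α, α ∈ T j ↔ α ∈ C ∧ α.degree = j) ∧
        ∃ N, ∀ j, N ≤ j → ((T j).card : ℚ) = Pq n (fun i => (m i : ℤ)) j := by
  classical
  induction s with
  | zero =>
    intro m hm h0 hn
    have hz : ∀ i, m i = 0 := fun i => by have := hm (Nat.zero_le i); omega
    refine ⟨∅, isLowerSet_empty, by simp, fun _ => ∅, by simp, 0, fun j _ => ?_⟩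
    simp [Pq, hz]
  | succ s ih =>
    intro m hm h0 hn
    by_cases hm0 : m 0 = 0
    · exact ih m hm (by omega) hn
    have hex : ∃ e, m e = 0 := ⟨n, hn⟩
    obtain ⟨p, hp⟩ : ∃ p, Nat.find hex = p + 1 := by
      refine ⟨Nat.find hex - 1, ?_⟩
      have : Nat.find hex ≠ 0 := by
        intro h
        have := Nat.find_spec hex
        rw [h] at this
        exact hm0 this
      omega
    have hp0 : m (p + 1) = 0 := hp ▸ Nat.find_spec hex
    have hpos : ∀ i, i ≤ p → 0 < m i := by
      intro i hi
      exact Nat.pos_of_ne_zero (Nat.find_min hex (by omega))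
    have hzero : ∀ i, p < i → m i = 0 := fun i hi => by
      have := hm (show p + 1 ≤ i from hi); omega
    have hpn : p + 1 ≤ n := by
      by_contra h
      have := hpos n (by omega)
      omega
    obtain ⟨C, hC, hsupp, T, hT, N, hN⟩ := ih (fun i => m i - 1)
      (fun a b hab => Nat.sub_le_sub_right (hm hab) 1) (by omega) (by simp [hn])
    have hsupp' := hsupp (p + 1) (by simp [hp0])
    let C' : Set (ℕ →₀ ℕ) := {α | (∀ i, p + 1 < i → α i = 0) ∧
      (α (p + 1) = 0 ∨ α - Finsupp.single (p + 1) 1 ∈ C)}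
    let T' : ℕ → Finset (ℕ →₀ ℕ) := fun j => (Finset.range (p + 1)).finsuppAntidiag j ∪
      (if j = 0 then ∅ else (T (j - 1)).image (fun α => α + Finsupp.single (p + 1) 1))
    have hT' : ∀ j α, α ∈ T' j ↔ α ∈ C' ∧ α.degree = j := by
      intro j α
      have hA : α ∈ (Finset.range (p + 1)).finsuppAntidiag j ↔
          (∀ i, p < i → α i = 0) ∧ α.degree = j := by
        rw [Finset.mem_finsuppAntidiag']
        have e : (α.sum fun _ x => x) = α.degree := rfl
        rw [e, and_comm]
        refine and_congr ⟨fun h i hi => ?_, fun h i hi => ?_⟩ Iff.rfl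
        · by_contra h0
          have := h (Finsupp.mem_support_iff.mpr h0)
          simp at this
          omega
        · rw [Finset.mem_range]
          by_contra h0
          exact Finsupp.mem_support_iff.mp hi (h i (by omega))
      have hB : ∀ β : ℕ →₀ ℕ, (β + Finsupp.single (p + 1) 1).degree = β.degree + 1 := by
        intro β
        rw [map_add, Finsupp.degree_single]
      simp only [T', Finset.mem_union, hA]
      constructor
      · rintro (⟨h1, h2⟩ | h)
        · exact ⟨⟨fun i hi => h1 i (by omega), Or.inl (h1 _ (by omega))⟩, h2⟩
        · split_ifs at h with hj
          · simp at h
          · obtain ⟨β, hβ, rfl⟩ := Finset.mem_image.mp h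
            obtain ⟨hβ1, hβ2⟩ := (hT _ _).mp hβ
            refine ⟨⟨fun i hi => ?_, Or.inr ?_⟩, ?_⟩
            · rw [Finsupp.add_apply, hsupp' β hβ1 i hi, Finsupp.single_eq_of_ne (by omega), add_zero]
            · rw [add_tsub_cancel_right]
              exact hβ1
            · rw [hB, hβ2]
              omega
      · rintro ⟨⟨h1, h2⟩, h3⟩
        by_cases h4 : α (p + 1) = 0
        · left
          refine ⟨fun i hi => ?_, h3⟩
          rcases Nat.lt_or_ge (p + 1) i with h | h
          · exact h1 i h
          · rw [show i = p + 1 by omega]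
            exact h4
        · right
          have h5 := h2.resolve_left h4
          have h6 : α - Finsupp.single (p + 1) 1 + Finsupp.single (p + 1) 1 = α := by
            apply tsub_add_cancel_of_le
            rw [Finsupp.single_le_iff]
            omega
          have h7 := hB (α - Finsupp.single (p + 1) 1)
          rw [h6] at h7
          rw [if_neg (by omega)]
          exact Finset.mem_image.mpr ⟨_, (hT _ _).mpr ⟨h5, by omega⟩, h6⟩
    refine ⟨C', ?_, ?_, T', hT', N + 1, ?_⟩
    · intro α β hβα hα
      refine ⟨fun i hi => by have := hβα i; have := hα.1 i hi; omega, ?_⟩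
      rcases hα.2 with h | h
      · left
        have := hβα (p + 1)
        omega
      · right
        exact hC (tsub_le_tsub_right hβα _) h
    · intro e he α hα i hi
      apply hα.1
      have : p < e := by
        by_contra h
        have := hpos e (by omega)
        omega
      omega
    · intro j hj
      obtain ⟨j, rfl⟩ : ∃ t, j = t + 1 := ⟨j - 1, by omega⟩
      have hdisj : Disjoint ((Finset.range (p + 1)).finsuppAntidiag (j + 1))
          ((T j).image (fun α => α + Finsupp.single (p + 1) 1)) := by
        rw [Finset.disjoint_left]
        intro α h1 h2
        obtain ⟨β, _, rfl⟩ := Finset.mem_image.mp h2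
        have h3 := (Finset.mem_finsuppAntidiag.mp h1).2
        have h4 : p + 1 ∈ (β + Finsupp.single (p + 1) 1).support := by simp
        have := h3 h4
        simp at this
      have hcard : (T' (j + 1)).card = (p + 1 + (j + 1) - 1).choose (j + 1) + (T j).card := by
        have : T' (j + 1) = (Finset.range (p + 1)).finsuppAntidiag (j + 1) ∪
          (T j).image (fun α => α + Finsupp.single (p + 1) 1) := by simp [T']
        rw [this, Finset.card_union_of_disjoint hdisj, Finset.card_finsuppAntidiag_nat_eq_choose,
          Finset.card_image_of_injective _ (add_left_injective _), Finset.card_range]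
      rw [hcard]
      push_cast
      rw [Pq_shift n p hpn m hpos hzero, hN j (by omega)]
      congr 1
      have : (j : ℚ) + p + 1 = ((p + 1 + (j + 1) - 1 : ℕ) : ℚ) := by
        rw [show p + 1 + (j + 1) - 1 = j + p + 1 by omega]; push_cast; ring
      rw [this, bq_nat]
      norm_cast
      exact Nat.choose_symm_of_eq_add (by omega)

end Combinatorics

theorem sign_patterns_stmt11 (f : Polynomial ℚ) (d : ℕ) (hf : f ≠ 0)
    (hdeg : f.natDegree = d) (hint : ∀ n : ℤ, ∃ z : ℤ, f.eval (n : ℚ) = (z : ℚ))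
    (m : Fin (d + 1) → ℤ)
    (hm : f = ∑ i : Fin (d + 1),
        ((binomPoly ((i : ℕ) + 1)).comp (Polynomial.X + Polynomial.C ((i : ℕ) : ℚ))
          - (binomPoly ((i : ℕ) + 1)).comp
              (Polynomial.X + Polynomial.C ((i : ℕ) : ℚ) - Polynomial.C ((m i : ℚ))))) :
    IsHilbertPolynomial f ↔ (Antitone m ∧ 0 ≤ m (Fin.last d)) := by
  let m' : ℕ → ℤ := fun i => if h : i < d + 1 then m ⟨i, h⟩ else 0
  have hm' : ∀ i : Fin (d + 1), m' i = m i := fun i => dif_pos i.isLt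
  have hz : ∀ i, d + 1 ≤ i → m' i = 0 := fun i hi => dif_neg (by omega)
  have hfe : ∀ x : ℚ, f.eval x = Pq (d + 1) m' x := by
    intro x
    rw [hm, Polynomial.eval_finsetSum, Pq, Finset.sum_range]
    refine Finset.sum_congr rfl fun i _ => ?_
    rw [hm' i]
    simp [bq, Polynomial.eval_comp]
  constructor
  · rintro ⟨k, R, _, _, _, A, _, hfin, hgen, N, hN⟩
    have hstep := forward_dir A hfin hgen (d + 1) m' hz
      ⟨N, fun j hj => by rw [hN j hj, hfe]⟩
    have hanti : Antitone m' := antitone_nat_of_succ_le hstep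
    refine ⟨fun a b hab => ?_, ?_⟩
    · rw [← hm' a, ← hm' b]
      exact hanti hab
    · rw [← hm', ← hz (d + 1) le_rfl]
      exact hanti (by simp)
  · rintro ⟨hanti, hlast⟩
    have hnn : ∀ i, 0 ≤ m i := fun i => hlast.trans (hanti (Fin.le_last i))
    have hnn' : ∀ i, 0 ≤ m' i := by
      intro i
      by_cases h : i < d + 1
      · exact (hm' ⟨i, h⟩).symm ▸ hnn ⟨i, h⟩
      · rw [hz i (by omega)]
    have hanti' : Antitone m' := by
      intro a b hab
      by_cases h : b < d + 1
      · rw [hm' ⟨b, h⟩, hm' ⟨a, by omega⟩]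
        exact hanti hab
      · rw [hz b (by omega)]
        exact hnn' a
    have hcast : (fun i => ((m' i).toNat : ℤ)) = m' := by
      funext i
      exact Int.toNat_of_nonneg (hnn' i)
    obtain ⟨C, hC, _, T, hT, N, hN⟩ := exists_order (d + 1) (m' 0).toNat
      (fun i => (m' i).toNat) (fun a b hab => Int.toNat_le_toNat (hanti' hab)) le_rfl
      (by simp [hz (d + 1) le_rfl])
    refine monomial_algebra f C hC T hT ⟨N, fun j hj => ?_⟩
    rw [hN j hj, hfe]
    simp only [hcast]
end

section
/- For every positive integer d, the polynomial 5·(d·x^d − x^{d-1} − x^{d-2} − ⋯ − x − 1), which equals (5x − 5)·(d·x^{d-1} + (d-1)·x^{d-2} + ⋯ + 2·x + 1), is a Hilbert polynomial. -/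
open Polynomial

/-- `f` agrees eventually with `i ↦ dim (V ^ i)` for a finite dimensional subspace `V` of a
commutative `ℚ`-algebra. -/
def PowHilb (f : Polynomial ℚ) : Prop :=
  ∃ (B : Type) (_ : CommRing B) (_ : Algebra ℚ B) (V : Submodule ℚ B), V.FG ∧
    ∃ N : ℕ, ∀ i : ℕ, N ≤ i → (Module.finrank ℚ ↥(V ^ i) : ℚ) = f.eval (i : ℚ)

section Grading
variable {B : Type} [CommRing B] [Algebra ℚ B] (V : Submodule ℚ B)

open DirectSum

/-- The graded pieces inside the external direct sum of the powers. -/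
noncomputable def pieces (i : ℕ) : Submodule ℚ (⨁ i : ℕ, ↥(V ^ i)) :=
  LinearMap.range (DirectSum.lof ℚ ℕ (fun i : ℕ => ↥(V ^ i)) i)

theorem lof_mem_pieces (i : ℕ) (x : ↥(V ^ i)) :
    DirectSum.lof ℚ ℕ (fun i : ℕ => ↥(V ^ i)) i x ∈ pieces V i := ⟨x, rfl⟩

theorem pieces_gradedMonoid : SetLike.GradedMonoid (pieces V) where
  one_mem := ⟨(GradedMonoid.GOne.one (A := fun i : ℕ => ↥(V ^ i))), rfl⟩
  mul_mem := by
    rintro i j _ _ ⟨x, rfl⟩ ⟨y, rfl⟩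
    refine ⟨(GradedMonoid.GMul.mul (A := fun i : ℕ => ↥(V ^ i)) x y), ?_⟩
    exact (DirectSum.of_mul_of (A := fun i : ℕ => ↥(V ^ i)) x y).symm

/-- The decomposition map. -/
noncomputable def piecesDecomp : (⨁ i : ℕ, ↥(V ^ i)) →ₗ[ℚ] ⨁ i : ℕ, ↥(pieces V i) :=
  DirectSum.toModule ℚ ℕ _ (fun i =>
    (DirectSum.lof ℚ ℕ (fun i : ℕ => ↥(pieces V i)) i) ∘ₗ
      (DirectSum.lof ℚ ℕ (fun i : ℕ => ↥(V ^ i)) i).rangeRestrict)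

/-- The grading. -/
@[reducible]
noncomputable def piecesGraded : GradedAlgebra (pieces V) :=
  letI := pieces_gradedMonoid V
  letI : DirectSum.Decomposition (pieces V) :=
    DirectSum.Decomposition.ofLinearMap (pieces V) (piecesDecomp V)
      (by
        apply DirectSum.linearMap_ext
        intro i
        ext x : 1
        simp only [LinearMap.comp_apply, piecesDecomp, DirectSum.toModule_lof, LinearMap.id_apply]
        erw [DirectSum.coeLinearMap_lof]
        rfl)
      (by
        apply DirectSum.linearMap_ext
        intro i
        ext x : 1
        obtain ⟨_, x, rfl⟩ := x
        simp only [LinearMap.comp_apply, LinearMap.id_apply]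
        erw [DirectSum.coeLinearMap_lof]
        simp only [piecesDecomp, DirectSum.toModule_lof]
        rfl)
  { }

theorem pieces_adjoin :
    Algebra.adjoin ℚ ((pieces V 1 : Submodule ℚ _) : Set (⨁ i : ℕ, ↥(V ^ i))) = ⊤ := by
  rw [eq_top_iff]
  rintro x -
  have key : ∀ (i : ℕ) (b : B) (hb : b ∈ V ^ i),
      DirectSum.lof ℚ ℕ (fun i : ℕ => ↥(V ^ i)) i ⟨b, hb⟩ ∈
        Algebra.adjoin ℚ ((pieces V 1 : Submodule ℚ _) : Set (⨁ i : ℕ, ↥(V ^ i))) := by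
    intro i b hb
    induction hb using Submodule.pow_induction_on_left' with
    | algebraMap r =>
      exact Subalgebra.algebraMap_mem _ r
    | add x y i hx hy h1 h2 =>
      have := add_mem h1 h2
      rw [← map_add] at this
      exact this
    | mem_mul m hm i x hx h =>
      have hm1 : m ∈ V ^ 1 := by simpa using hm
      have h1 := mul_mem (Algebra.subset_adjoin (R := ℚ) (lof_mem_pieces V 1 ⟨m, hm1⟩)) h
      have h2 := DirectSum.of_mul_of (A := fun i : ℕ => ↥(V ^ i)) (⟨m, hm1⟩ : ↥(V ^ 1)) ⟨x, hx⟩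
      erw [h2] at h1
      convert h1 using 1
      apply DirectSum.of_eq_of_gradedMonoid_eq
      refine Sigma.subtype_ext ?_ rfl
      show i + 1 = 1 + i
      omega
  induction x using DirectSum.induction_on with
  | zero => exact zero_mem _
  | of i x => exact key i x.1 x.2
  | add x y hx hy => exact add_mem hx hy

theorem PowHilb.isHilbert {f : Polynomial ℚ} (h : PowHilb f) : IsHilbertPolynomial f := by
  obtain ⟨B, _, _, V, hV, N, hN⟩ := h
  have e : ∀ i, Module.finrank ℚ ↥(pieces V i) = Module.finrank ℚ ↥(V ^ i) := fun i =>
    LinearMap.finrank_range_of_inj (DirectSum.of_injective (β := fun i : ℕ => ↥(V ^ i)) i)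
  refine ⟨ℚ, ⨁ i : ℕ, ↥(V ^ i), inferInstance, inferInstance, inferInstance, pieces V,
    piecesGraded V, ?_, pieces_adjoin V, N, fun i hi => by rw [e, hN i hi]⟩
  intro i
  have : FiniteDimensional ℚ ↥(V ^ i) := Module.Finite.iff_fg.2 (hV.pow i)
  unfold pieces
  infer_instance

end Grading
theorem prod_pow_eq {B C : Type} [CommRing B] [CommRing C] [Algebra ℚ B] [Algebra ℚ C]
    (V : Submodule ℚ B) (W : Submodule ℚ C) (n : ℕ) :
    (V.prod W) ^ (n + 1) = (V ^ (n + 1)).prod (W ^ (n + 1)) := by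
  have mulp : ∀ (V V' : Submodule ℚ B) (W W' : Submodule ℚ C),
      V.prod W * V'.prod W' = (V * V').prod (W * W') := by
    intro V V' W W'
    apply le_antisymm
    · rw [Submodule.mul_le]
      rintro ⟨a, b⟩ ⟨ha, hb⟩ ⟨c, d⟩ ⟨hc, hd⟩
      exact ⟨Submodule.mul_mem_mul ha hc, Submodule.mul_mem_mul hb hd⟩
    · rintro ⟨x, y⟩ ⟨hx, hy⟩
      have h1 : ((x, 0) : B × C) ∈ V.prod W * V'.prod W' := by
        replace hx : x ∈ V * V' := hx
        clear hy
        induction hx using Submodule.mul_induction_on' with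
        | mem_mul_mem a ha b hb =>
          have := Submodule.mul_mem_mul (M := V.prod W) (N := V'.prod W') (m := (a, 0))
            (n := (b, 0)) ⟨ha, zero_mem _⟩ ⟨hb, zero_mem _⟩
          simpa using this
        | add a _ b _ h1 h2 => simpa using add_mem h1 h2
      have h2 : ((0, y) : B × C) ∈ V.prod W * V'.prod W' := by
        replace hy : y ∈ W * W' := hy
        clear hx h1
        induction hy using Submodule.mul_induction_on' with
        | mem_mul_mem a ha b hb =>
          have := Submodule.mul_mem_mul (M := V.prod W) (N := V'.prod W') (m := (0, a))
            (n := (0, b)) ⟨zero_mem _, ha⟩ ⟨zero_mem _, hb⟩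
          simpa using this
        | add a _ b _ h1 h2 => simpa using add_mem h1 h2
      simpa using add_mem h1 h2
  induction n with
  | zero => simp
  | succ n ih => rw [pow_succ, ih, mulp, ← pow_succ, ← pow_succ]

theorem PowHilb.add {f g : Polynomial ℚ} (hf : PowHilb f) (hg : PowHilb g) : PowHilb (f + g) := by
  obtain ⟨B, _, _, V, hV, N, hN⟩ := hf
  obtain ⟨C, _, _, W, hW, M, hM⟩ := hg
  refine ⟨B × C, inferInstance, inferInstance, V.prod W, hV.prod hW, N + M + 1, fun i hi => ?_⟩
  obtain ⟨n, rfl⟩ : ∃ n, i = n + 1 := ⟨i - 1, by omega⟩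
  have : FiniteDimensional ℚ ↥(V ^ (n + 1)) := Module.Finite.iff_fg.2 (hV.pow _)
  have : FiniteDimensional ℚ ↥(W ^ (n + 1)) := Module.Finite.iff_fg.2 (hW.pow _)
  have hr : (V ^ (n + 1)).prod (W ^ (n + 1)) =
      LinearMap.range (LinearMap.prodMap (V ^ (n + 1)).subtype (W ^ (n + 1)).subtype) := by
    rw [LinearMap.range_prodMap, Submodule.range_subtype, Submodule.range_subtype]
  have hinj : Function.Injective
      (LinearMap.prodMap (V ^ (n + 1)).subtype (W ^ (n + 1)).subtype) :=
    Function.Injective.prodMap (Submodule.subtype_injective _) (Submodule.subtype_injective _)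
  rw [prod_pow_eq, hr, LinearMap.finrank_range_of_inj hinj, Module.finrank_prod, Polynomial.eval_add,
    ← hN _ (by omega), ← hM _ (by omega)]
  push_cast
  rfl

open TensorProduct in
theorem tensor_pow_eq {B C : Type} [CommRing B] [CommRing C] [Algebra ℚ B] [Algebra ℚ C]
    (V : Submodule ℚ B) (W : Submodule ℚ C) (n : ℕ) :
    (Submodule.map₂ (TensorProduct.mk ℚ B C) V W) ^ n =
      Submodule.map₂ (TensorProduct.mk ℚ B C) (V ^ n) (W ^ n) := by
  have mulp : ∀ (V V' : Submodule ℚ B) (W W' : Submodule ℚ C),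
      Submodule.map₂ (TensorProduct.mk ℚ B C) V W * Submodule.map₂ (TensorProduct.mk ℚ B C) V' W'
       = Submodule.map₂ (TensorProduct.mk ℚ B C) (V * V') (W * W') := by
    intro V V' W W'
    rw [Submodule.mul_eq_span_mul_set V V', Submodule.mul_eq_span_mul_set W W',
      Submodule.map₂_span_span, Submodule.map₂_eq_span_image2, Submodule.map₂_eq_span_image2,
      Submodule.span_mul_span]
    congr 1
    ext z
    constructor
    · rintro ⟨_, ⟨a, ha, b, hb, rfl⟩, _, ⟨c, hc, d, hd, rfl⟩, rfl⟩
      exact ⟨a * c, Set.mul_mem_mul ha hc, b * d, Set.mul_mem_mul hb hd, by simp⟩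
    · rintro ⟨_, ⟨a, ha, c, hc, rfl⟩, _, ⟨b, hb, d, hd, rfl⟩, rfl⟩
      exact ⟨_, ⟨a, ha, b, hb, rfl⟩, _, ⟨c, hc, d, hd, rfl⟩, by simp⟩
  induction n with
  | zero =>
    rw [pow_zero, pow_zero, pow_zero, Submodule.one_eq_span, Submodule.one_eq_span,
      Submodule.one_eq_span, Submodule.map₂_span_span]
    simp [Algebra.TensorProduct.one_def]
  | succ n ih => rw [pow_succ, ih, mulp, ← pow_succ, ← pow_succ]

theorem PowHilb.mul {f g : Polynomial ℚ} (hf : PowHilb f) (hg : PowHilb g) : PowHilb (f * g) := by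
  obtain ⟨B, _, _, V, hV, N, hN⟩ := hf
  obtain ⟨C, _, _, W, hW, M, hM⟩ := hg
  refine ⟨TensorProduct ℚ B C, inferInstance, inferInstance,
    Submodule.map₂ (TensorProduct.mk ℚ B C) V W, hV.map₂ _ hW, N + M, fun n hi => ?_⟩
  have hr : Submodule.map₂ (TensorProduct.mk ℚ B C) (V ^ n) (W ^ n) =
      LinearMap.range (TensorProduct.mapIncl (V ^ n) (W ^ n)) := by
    rw [TensorProduct.range_mapIncl]
  have hinj : Function.Injective (TensorProduct.mapIncl (V ^ n) (W ^ n)) := 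
    TensorProduct.map_injective_of_flat_flat _ _ (Submodule.subtype_injective _) (Submodule.subtype_injective _)
  rw [tensor_pow_eq, hr, LinearMap.finrank_range_of_inj hinj, Module.finrank_tensorProduct,
    Polynomial.eval_mul, ← hN _ (by omega), ← hM _ (by omega)]
  push_cast
  rfl

theorem PowHilb.one : PowHilb 1 := by
  refine ⟨ℚ, inferInstance, inferInstance, 1, ?_, 0, fun i _ => ?_⟩
  · rw [Submodule.one_eq_span]; exact Submodule.fg_span_singleton 1
  · rw [one_pow, Submodule.one_eq_span, finrank_span_singleton (by simp)]
    simp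

theorem PowHilb.zero : PowHilb 0 := by
  refine ⟨ℚ, inferInstance, inferInstance, ⊥, Submodule.fg_bot, 1, fun i hi => ?_⟩
  rw [Submodule.bot_pow (by omega)]
  simp
open scoped Pointwise in
theorem set_pow_eq {B : Type} [CommRing B] (x y : B) (i : ℕ) :
    ({1, x, y} : Set B) ^ i = {z | ∃ p q : ℕ, p + q ≤ i ∧ z = x ^ p * y ^ q} := by
  induction i with
  | zero =>
    ext z
    simp only [pow_zero, Set.mem_one, Set.mem_ofPred_eq]
    constructor
    · rintro rfl
      exact ⟨0, 0, by simp⟩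
    · rintro ⟨p, q, h, rfl⟩
      obtain rfl : p = 0 := by omega
      obtain rfl : q = 0 := by omega
      simp
  | succ i ih =>
    rw [pow_succ, ih]
    ext z
    constructor
    · rintro ⟨_, ⟨p, q, h, rfl⟩, w, hw, rfl⟩
      rcases hw with rfl | rfl | rfl
      · exact ⟨p, q, by omega, by simp⟩
      · exact ⟨p + 1, q, by omega, by simp only; ring⟩
      · exact ⟨p, q + 1, by omega, by simp only; ring⟩
    · rintro ⟨p, q, h, rfl⟩
      by_cases h1 : p + q ≤ i
      · exact ⟨_, ⟨p, q, h1, rfl⟩, 1, by simp, by simp⟩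
      · rcases p with _ | p
        · rcases q with _ | q
          · omega
          · exact ⟨_, ⟨0, q, by omega, rfl⟩, y, by simp, by simp only; ring⟩
        · exact ⟨_, ⟨p, q, by omega, rfl⟩, x, by simp, by simp only; ring⟩

theorem sum_count (a i : ℕ) (h : a ≤ i + 1) :
    ((∑ p : Fin a, (i + 1 - (p : ℕ)) : ℕ) : ℚ) = a * ((i : ℚ) + 1) - (a.choose 2 : ℕ) := by
  rw [Finset.sum_range (fun p => i + 1 - p) |>.symm]
  induction a with
  | zero => simp
  | succ a ih =>
    have h2 : (a + 1).choose 2 = a + a.choose 2 := by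
      rw [Nat.choose_succ_succ' a 1]; simp
    rw [Finset.sum_range_succ, Nat.cast_add, ih (by omega), Nat.cast_sub (by omega), h2]
    push_cast
    ring

theorem PowHilb.planeCurve (a : ℕ) :
    PowHilb (C (a : ℚ) * (X + 1) - C ((a.choose 2 : ℕ) : ℚ)) := by
  have hne : (X ^ a : ℚ[X]) ≠ 0 := by simp
  let A := AdjoinRoot (X ^ a : ℚ[X])
  let pb : PowerBasis ℚ A := AdjoinRoot.powerBasis hne
  have hdim : pb.dim = a := by simp [pb]
  have hgen : pb.gen ^ a = 0 := by
    have h0 : AdjoinRoot.mk (X ^ a : ℚ[X]) (X ^ a) = 0 := AdjoinRoot.mk_self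
    rw [map_pow, AdjoinRoot.mk_X] at h0
    simpa only [pb, AdjoinRoot.powerBasis_gen] using h0
  let e := pb.basis.smulTower (Polynomial.basisMonomials A)
  let x : A[X] := C pb.gen
  let y : A[X] := X
  have he : ∀ pq, e pq = x ^ (pq.1 : ℕ) * y ^ pq.2 := by
    intro pq
    simp only [e, Module.Basis.smulTower_apply, PowerBasis.coe_basis, Polynomial.coe_basisMonomials,
      x, y, ← Polynomial.C_pow, Polynomial.C_mul_X_pow_eq_monomial, Polynomial.smul_monomial,
      smul_eq_mul, mul_one]
  refine ⟨A[X], inferInstance, inferInstance, Submodule.span ℚ {1, x, y},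
    Submodule.fg_span (by simp), a, fun i hi => ?_⟩
  let b : (Σ p : Fin pb.dim, Fin (i + 1 - (p : ℕ))) → A[X] := fun s => e (s.1, (s.2 : ℕ))
  have hb : LinearIndependent ℚ b := by
    refine e.linearIndependent.comp (fun s : (Σ p : Fin pb.dim, Fin (i + 1 - (p : ℕ))) =>
      (s.1, (s.2 : ℕ))) ?_
    rintro ⟨p, q⟩ ⟨p', q'⟩ h
    simp only [Prod.mk.injEq] at h
    obtain ⟨rfl, h⟩ := h
    rw [Fin.ext h]
  have hspan : Submodule.span ℚ {1, x, y} ^ i = Submodule.span ℚ (Set.range b) := by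
    rw [Submodule.span_pow, set_pow_eq]
    apply le_antisymm
    · rw [Submodule.span_le]
      rintro _ ⟨p, q, h, rfl⟩
      by_cases hp : p < pb.dim
      · apply Submodule.subset_span
        exact ⟨⟨⟨p, hp⟩, ⟨q, by simp only; omega⟩⟩, by simp only [b, he]⟩
      · have : x ^ p = 0 := by
          obtain ⟨r, rfl⟩ : ∃ r, p = a + r := ⟨p - a, by omega⟩
          rw [pow_add, ← Polynomial.C_pow, hgen]; simp
        rw [this, zero_mul]
        exact zero_mem _
    · apply Submodule.span_mono
      rintro _ ⟨⟨p, q⟩, rfl⟩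
      exact ⟨p, q, by omega, by simp only [b, he]⟩
  rw [hspan, finrank_span_eq_card hb, Fintype.card_sigma]
  simp only [Fintype.card_fin]
  rw [sum_count _ _ (by omega), hdim]
  simp

theorem PowHilb.nat (n : ℕ) : PowHilb (C (n : ℚ)) := by
  induction n with
  | zero => simpa using PowHilb.zero
  | succ n ih => simpa using ih.add PowHilb.one

theorem PowHilb.Y_pow (n : ℕ) : PowHilb ((X + 1 : ℚ[X]) ^ n) := by
  induction n with
  | zero => simpa using PowHilb.one
  | succ n ih =>
    rw [pow_succ]
    refine ih.mul ?_
    simpa using PowHilb.planeCurve 1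

theorem PowHilb.main (D : ℕ) (hD : 1 ≤ D) (c : ℕ → ℤ) (n : ℕ) : ∀ (a E : ℕ), 4 * D + 1 ≤ E →
    4 * (E : ℤ) ≤ a * ((a : ℤ) - 1) → (∀ k < n, |c k| ≤ (E : ℤ) * (D : ℤ) ^ (n - 1 - k)) →
    PowHilb (C (a : ℚ) * (X + 1) ^ n + ∑ k ∈ Finset.range n, C ((c k : ℤ) : ℚ) * (X + 1) ^ k) := by
  induction n with
  | zero =>
    intro a E _ _ _
    simpa using PowHilb.nat a
  | succ n ih =>
    intro a E hE ha hc
    have hcn : |c n| ≤ (E : ℤ) := by simpa using hc n (by omega)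
    have hch : ((a.choose 2 : ℕ) : ℤ) * 2 = a * ((a : ℤ) - 1) := by
      have h0 : a.choose 2 * 2 = a * (a - 1) := by
        rw [Nat.choose_two_right, Nat.div_mul_cancel (Nat.even_mul_pred_self _).two_dvd]
      rcases a with _ | a
      · simp
      · have h1 : (((a + 1).choose 2 * 2 : ℕ) : ℤ) = (((a + 1) * (a + 1 - 1) : ℕ) : ℤ) := by
          rw [h0]
        push_cast at h1 ⊢
        simpa using h1
    have hlow := (abs_le.1 hcn).1
    obtain ⟨a', ha'⟩ : ∃ a' : ℕ, (a' : ℤ) = (a.choose 2 : ℕ) + c n :=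
      ⟨((a.choose 2 : ℕ) + c n).toNat, Int.toNat_of_nonneg (by linarith)⟩
    have hE1 : (E : ℤ) ≤ a' := by linarith
    have hE2 : 4 * (D : ℤ) + 1 ≤ E := by exact_mod_cast hE
    have h1 := ih a' (E * D) (by nlinarith) (by push_cast; nlinarith) (by
      intro k hk
      have := hc k (by omega)
      rw [show n + 1 - 1 - k = (n - 1 - k) + 1 by omega, pow_succ] at this
      push_cast
      linarith)
    have h2 := ((PowHilb.Y_pow n).mul (PowHilb.planeCurve a)).add h1
    convert h2 using 1
    rw [Finset.sum_range_succ]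
    have h3 : (a' : ℚ) = ((a.choose 2 : ℕ) : ℚ) + (c n : ℚ) := by exact_mod_cast ha'
    rw [h3, C_add]
    ring

theorem coeff_X_sub_one_pow (m k : ℕ) :
    ((X - C 1 : ℤ[X]) ^ m).coeff k = (-1) ^ (m - k) * (m.choose k : ℤ) := by
  rw [sub_eq_add_neg, ← C_neg, Polynomial.coeff_X_add_C_pow]

theorem coeff_bound (d k : ℕ) (hk : k < d) :
    |((C (5 : ℤ) * (C (d : ℤ) * (X - C 1) ^ d - ∑ i ∈ Finset.range d, (X - C 1) ^ i)) : ℤ[X]).coeff k|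
      ≤ ((5 * d ^ 2 + 5 : ℕ) : ℤ) * (d : ℤ) ^ (d - 1 - k) := by
  have hco : ∀ m, |((X - C 1 : ℤ[X]) ^ m).coeff k| ≤ (m.choose k : ℤ) := by
    intro m
    rw [coeff_X_sub_one_pow, abs_mul, abs_pow]
    simp
  have hsum : ∀ m, ∑ i ∈ Finset.range m, (i.choose k : ℤ) = (m.choose (k + 1) : ℤ) := by
    intro m
    induction m with
    | zero => simp
    | succ m ih => rw [Finset.sum_range_succ, ih, Nat.choose_succ_succ']; push_cast; ring
  rw [Polynomial.coeff_C_mul, Polynomial.coeff_sub, Polynomial.coeff_C_mul,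
    Polynomial.finsetSum_coeff, abs_mul]
  have h1 := abs_sub (↑d * ((X - C 1 : ℤ[X]) ^ d).coeff k)
    (∑ i ∈ Finset.range d, ((X - C 1 : ℤ[X]) ^ i).coeff k)
  have h2 : |∑ i ∈ Finset.range d, ((X - C 1 : ℤ[X]) ^ i).coeff k| ≤ (d.choose (k + 1) : ℤ) :=
    (Finset.abs_sum_le_sum_abs _ _).trans
      ((Finset.sum_le_sum fun i _ => hco i).trans (hsum d).le)
  have h3 : |↑d * ((X - C 1 : ℤ[X]) ^ d).coeff k| ≤ d * (d.choose k : ℤ) := by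
    rw [abs_mul, Nat.abs_cast]
    exact mul_le_mul_of_nonneg_left (hco d) (by positivity)
  have h4 : (d.choose k : ℤ) ≤ d * (d : ℤ) ^ (d - 1 - k) := by
    have := Nat.choose_le_pow d (d - k)
    rw [Nat.choose_symm hk.le, show d - k = (d - 1 - k) + 1 by omega, pow_succ'] at this
    exact_mod_cast this
  have h5 : (d.choose (k + 1) : ℤ) ≤ (d : ℤ) ^ (d - 1 - k) := by
    have := Nat.choose_le_pow d (d - (k + 1))
    rw [Nat.choose_symm hk, show d - (k + 1) = (d - 1 - k) by omega] at this
    exact_mod_cast this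
  have h6 := mul_le_mul_of_nonneg_left h4 (show (0 : ℤ) ≤ d by positivity)
  push_cast
  rw [abs_of_pos (by norm_num : (0 : ℤ) < 5)]
  nlinarith

theorem PowHilb.final (d : ℕ) (hd : 3 ≤ d) : PowHilb (C (5 : ℚ) *
      (C (d : ℚ) * X ^ d - ∑ i ∈ Finset.range d, X ^ i)) := by
  let F : ℤ[X] := C (5 : ℤ) * (C (d : ℤ) * (X - C 1) ^ d - ∑ i ∈ Finset.range d, (X - C 1) ^ i)
  have hco : ∀ m k, ((X - C 1 : ℤ[X]) ^ m).coeff k = (-1) ^ (m - k) * (m.choose k : ℤ) :=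
    fun m k => coeff_X_sub_one_pow m k
  have hdeg : F.natDegree < d + 1 := by
    rw [Nat.lt_succ_iff, Polynomial.natDegree_le_iff_coeff_eq_zero]
    intro N hN
    simp only [F, Polynomial.coeff_C_mul, Polynomial.coeff_sub, Polynomial.finsetSum_coeff, hco]
    rw [Nat.choose_eq_zero_of_lt hN, Finset.sum_eq_zero]
    · simp
    · intro i hi
      rw [Nat.choose_eq_zero_of_lt (by have := Finset.mem_range.1 hi; omega)]; simp
  have htop : F.coeff d = ((5 * d : ℕ) : ℤ) := by
    simp only [F, Polynomial.coeff_C_mul, Polynomial.coeff_sub, Polynomial.finsetSum_coeff, hco]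
    rw [Finset.sum_eq_zero]
    · simp
    · intro i hi
      rw [Nat.choose_eq_zero_of_lt (Finset.mem_range.1 hi)]; simp
  have key := PowHilb.main d (by omega) F.coeff d (5 * d) (5 * d ^ 2 + 5) (by nlinarith)
    (by push_cast; nlinarith [(by exact_mod_cast hd : (3 : ℤ) ≤ d)]) (fun k hk => coeff_bound d k hk)
  convert key using 1
  have h5 : (C (5 : ℚ)) = 5 := rfl
  have h1 : C (5 : ℚ) * (C (d : ℚ) * X ^ d - ∑ i ∈ Finset.range d, X ^ i)
      = (F.map (Int.castRingHom ℚ)).comp (X + 1) := by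
    simp [F, Polynomial.map_sum, Polynomial.map_sub, Polynomial.sum_comp, h5]
  have h2 := Polynomial.as_sum_range_C_mul_X_pow' F hdeg
  rw [h1]
  conv_lhs => rw [h2]
  rw [Finset.sum_range_succ, htop]
  simp [Polynomial.map_sum, Polynomial.sum_comp, h5]
  ring

theorem sign_patterns_stmt17 (d : ℕ) (hd : 0 < d) :
    IsHilbertPolynomial (Polynomial.C (5 : ℚ) *
      (Polynomial.C (d : ℚ) * Polynomial.X ^ d
        - ∑ i ∈ Finset.range d, Polynomial.X ^ i)) := by
  apply PowHilb.isHilbert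
  rcases (by omega : d = 1 ∨ d = 2 ∨ 3 ≤ d) with rfl | rfl | h
  · convert PowHilb.planeCurve 5 using 1
    simp only [show Nat.choose 5 2 = 10 from rfl, Finset.sum_range_one, Nat.cast_one, map_one]
    push_cast
    rw [show (10 : ℚ) = 5 + 5 by norm_num, C_add]
    ring
  · convert (((PowHilb.Y_pow 1).mul (PowHilb.planeCurve 10)).add (PowHilb.planeCurve 20)).add
      (PowHilb.nat 200) using 1
    simp only [show Nat.choose 10 2 = 45 from rfl, show Nat.choose 20 2 = 190 from rfl,
      Finset.sum_range_succ, Finset.sum_range_zero]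
    push_cast
    simp only [Polynomial.C_ofNat]
    ring
  · exact PowHilb.final d h
end
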